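/- arXiv:1806.03487 — 11 statements merged into one kernel-verified Lean document; each statement's English description precedes it below -/
import Mathlib

section
/- Let N ≥ 1, let D be an N×N real diagonal matrix with nonnegative diagonal entries, let R be an N×N real matrix with nonnegative entries, and let π ∈ ℝ^N be a row vector all of whose entries are strictly positive. If there exists a row vector v ∈ ℝ^N with nonnegative entries satisfying v·D = π + v·R, then every eigenvalue of R − D (every element of the spectrum of the complex matrix obtained from R − D) has strictly negative real part. -/
open Matrix

/-- If `D` is an `N×N` nonnegative diagonal matrix, `R` is an `N×N`
nonnegative matrix, `π` is a strictly positive row vector, and there exists a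
nonnegative row vector `v` with `v·D = π + v·R`, then every eigenvalue of `R - D`
has strictly negative real part. -/
theorem stmt_0 (N : ℕ) (hN : 1 ≤ N)
    (D R : Matrix (Fin N) (Fin N) ℝ)
    (hDdiag : D.IsDiag) (hDnonneg : ∀ i, 0 ≤ D i i)
    (hR : ∀ i j, 0 ≤ R i j)
    (π : Fin N → ℝ) (hπ : ∀ i, 0 < π i)
    (hv : ∃ v : Fin N → ℝ, (∀ i, 0 ≤ v i) ∧ v ᵥ* D = π + v ᵥ* R) :
    ∀ μ ∈ spectrum ℂ ((R - D).map (algebraMap ℝ ℂ)), μ.re < 0 := by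
  intro μ hμ
  obtain ⟨v, hv0, hv⟩ := hv
  by_contra hre
  push Not at hre
  rw [spectrum.mem_iff, Matrix.isUnit_iff_isUnit_det, isUnit_iff_ne_zero, not_not] at hμ
  obtain ⟨x, hx0, hx⟩ := Matrix.exists_mulVec_eq_zero_iff.mpr hμ
  have hDsum : ∀ i (f : Fin N → ℂ), ∑ j, (D i j : ℂ) * f j = D i i * f i := by
    intro i f
    refine Finset.sum_eq_single i (fun j _ hj => ?_) (by simp)
    rw [hDdiag (Ne.symm hj)]; simp
  have heq : ∀ i, (μ + D i i) * x i = ∑ j, (R i j : ℂ) * x j := by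
    intro i
    have h := congrFun hx i
    rw [Matrix.sub_mulVec, Algebra.algebraMap_eq_smul_one, Matrix.smul_mulVec,
      Matrix.one_mulVec] at h
    simp only [Pi.sub_apply, Pi.smul_apply, smul_eq_mul, Matrix.mulVec, dotProduct,
      Matrix.map_apply, Matrix.sub_apply, Complex.coe_algebraMap, Complex.ofReal_sub, sub_mul,
      Finset.sum_sub_distrib, hDsum, Pi.zero_apply] at h
    linear_combination h
  have hle : ∀ i, D i i * ‖x i‖ ≤ ∑ j, R i j * ‖x j‖ := by
    intro i
    have h1 : D i i ≤ ‖μ + D i i‖ := by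
      have := Complex.re_le_norm (μ + D i i)
      simp only [Complex.add_re, Complex.ofReal_re] at this
      linarith
    calc D i i * ‖x i‖ ≤ ‖μ + D i i‖ * ‖x i‖ := by gcongr
      _ = ‖∑ j, (R i j : ℂ) * x j‖ := by rw [← norm_mul, heq]
      _ ≤ ∑ j, ‖(R i j : ℂ) * x j‖ := norm_sum_le _ _
      _ = _ := by
        refine Finset.sum_congr rfl fun j _ => ?_
        rw [norm_mul, Complex.norm_real, Real.norm_of_nonneg (hR i j)]
  have hvj : ∀ j, v j * D j j = π j + ∑ i, v i * R i j := by
    intro j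
    have h := congrFun hv j
    simp only [Matrix.vecMul, dotProduct, Pi.add_apply] at h
    rw [← h]
    symm
    refine Finset.sum_eq_single j (fun i _ hi => ?_) (by simp)
    rw [hDdiag hi]; simp
  have hsum : ∑ i, v i * (D i i * ‖x i‖) ≤ ∑ i, v i * ∑ j, R i j * ‖x j‖ :=
    Finset.sum_le_sum fun i _ => mul_le_mul_of_nonneg_left (hle i) (hv0 i)
  have e1 : ∑ i, v i * (D i i * ‖x i‖)
      = ∑ j, π j * ‖x j‖ + ∑ i, v i * ∑ j, R i j * ‖x j‖ := by
    have e2 : ∑ i, v i * ∑ j, R i j * ‖x j‖ = ∑ j, (∑ i, v i * R i j) * ‖x j‖ := by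
      simp only [Finset.mul_sum, Finset.sum_mul, mul_assoc]
      exact Finset.sum_comm
    rw [e2, ← Finset.sum_add_distrib]
    refine Finset.sum_congr rfl fun j _ => ?_
    rw [← mul_assoc, hvj, add_mul]
  have hnn : ∀ j ∈ Finset.univ, 0 ≤ π j * ‖x j‖ :=
    fun j _ => mul_nonneg (hπ j).le (norm_nonneg _)
  have h0 : ∑ j, π j * ‖x j‖ = 0 := le_antisymm (by linarith) (Finset.sum_nonneg hnn)
  apply hx0
  funext j
  have := (Finset.sum_eq_zero_iff_of_nonneg hnn).mp h0 j (Finset.mem_univ j)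
  simpa [(hπ j).ne'] using this
end

section
/- Let N ≥ 1, let D be an N×N real diagonal matrix with nonnegative diagonal entries, let R be an N×N real matrix with nonnegative entries, and let π ∈ ℝ^N be a row vector all of whose entries are strictly positive. If there exists a row vector v ∈ ℝ^N with nonnegative entries satisfying v·D = π + v·R, then the matrix D − R is invertible, the solution v is unique, and v = π·(D − R)^{-1}. -/
open Matrix

/-- Under the same hypotheses as the stability lemma, the matrix
`D - R` is invertible, the solution `v` of `v·D = π + v·R` is unique, and
`v = π·(D - R)⁻¹`. -/
theorem stmt_1 (N : ℕ) (hN : 1 ≤ N)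
    (D R : Matrix (Fin N) (Fin N) ℝ)
    (hDdiag : D.IsDiag) (hDnonneg : ∀ i, 0 ≤ D i i)
    (hR : ∀ i j, 0 ≤ R i j)
    (π : Fin N → ℝ) (hπ : ∀ i, 0 < π i)
    (v : Fin N → ℝ) (hv : ∀ i, 0 ≤ v i)
    (heq : v ᵥ* D = π + v ᵥ* R) :
    IsUnit (D - R) ∧
      (∀ w : Fin N → ℝ, w ᵥ* D = π + w ᵥ* R → w = v) ∧
      v = π ᵥ* (D - R)⁻¹ := by
  have hD : ∀ (w : Fin N → ℝ) j, (w ᵥ* D) j = w j * D j j := by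
    intro w j
    simp only [Matrix.vecMul, dotProduct]
    rw [Finset.sum_eq_single j]
    · intro b _ hb
      rw [hDdiag hb, mul_zero]
    · simp
  have hRs : ∀ (w : Fin N → ℝ) j, (w ᵥ* R) j = ∑ i, w i * R i j := fun w j => rfl
  have hvj : ∀ j, v j * D j j = π j + ∑ i, v i * R i j := by
    intro j
    rw [← hD, heq, Pi.add_apply, hRs]
  have hvpos : ∀ j, 0 < v j := by
    intro j
    have h1 : 0 ≤ ∑ i, v i * R i j :=
      Finset.sum_nonneg fun i _ => mul_nonneg (hv i) (hR i j)
    have h2 : v j ≠ 0 := by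
      intro h0
      have h3 := hvj j
      rw [h0, zero_mul] at h3
      linarith [hπ j]
    exact lt_of_le_of_ne (hv j) (Ne.symm h2)
  have hker : ∀ u : Fin N → ℝ, u ᵥ* (D - R) = 0 → u = 0 := by
    intro u hu
    haveI : Nonempty (Fin N) := ⟨⟨0, hN⟩⟩
    obtain ⟨j, hj⟩ := Finite.exists_max (fun i => |u i| / v i)
    set c := |u j| / v j with hc
    have hcj : |u j| = c * v j := by
      rw [hc, div_mul_cancel₀ _ (hvpos j).ne']
    have hle : ∀ i, |u i| ≤ c * v i := fun i => (div_le_iff₀ (hvpos i)).1 (hj i)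
    have huj : u j * D j j = ∑ i, u i * R i j := by
      have h := congrFun hu j
      rw [Matrix.vecMul_sub, Pi.sub_apply, hD, hRs, Pi.zero_apply] at h
      linarith
    have h1 : |u j| * D j j ≤ c * ∑ i, v i * R i j := by
      calc |u j| * D j j = |u j * D j j| := by rw [abs_mul, abs_of_nonneg (hDnonneg j)]
        _ = |∑ i, u i * R i j| := by rw [huj]
        _ ≤ ∑ i, |u i * R i j| := Finset.abs_sum_le_sum_abs _ _
        _ ≤ ∑ i, c * (v i * R i j) := by
          apply Finset.sum_le_sum
          intro i _
          rw [abs_mul, abs_of_nonneg (hR i j), ← mul_assoc]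
          exact mul_le_mul_of_nonneg_right (hle i) (hR i j)
        _ = c * ∑ i, v i * R i j := by rw [Finset.mul_sum]
    have h2 : c * π j ≤ 0 := by
      rw [hcj, mul_assoc, hvj j, mul_add] at h1
      linarith
    have h3 : c ≤ 0 := nonpos_of_mul_nonpos_left h2 (hπ j)
    funext i
    have h4 : |u i| ≤ 0 := (hle i).trans (mul_nonpos_of_nonpos_of_nonneg h3 (hv i))
    exact abs_nonpos_iff.1 h4
  have hunit : IsUnit (D - R) := by
    rw [← Matrix.vecMul_injective_iff_isUnit]
    intro a b hab
    have hab' : a ᵥ* (D - R) = b ᵥ* (D - R) := hab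
    exact sub_eq_zero.1 (hker _ (by rw [Matrix.sub_vecMul, hab', sub_self]))
  have hsol : v ᵥ* (D - R) = π := by
    rw [Matrix.vecMul_sub, heq, add_sub_cancel_right]
  refine ⟨hunit, ?_, ?_⟩
  · intro w hw
    refine sub_eq_zero.1 (hker _ ?_)
    rw [Matrix.sub_vecMul, hsol, Matrix.vecMul_sub, hw, add_sub_cancel_right, sub_self]
  · rw [← hsol, Matrix.vecMul_vecMul,
      Matrix.mul_nonsing_inv _ ((Matrix.isUnit_iff_isUnit_det _).1 hunit), Matrix.vecMul_one]
end

section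
/- Let N ≥ 1, let D be an N×N real diagonal matrix with nonnegative diagonal entries, let R be an N×N real matrix with nonnegative entries, and let π ∈ ℝ^N be a row vector with all entries strictly positive. Assume there exists a row vector with nonnegative entries v̄₁ satisfying v̄₁·D = π + v̄₁·R. Let v₀(t) = π for all t, and for each integer m ≥ 1 let v_m : ℝ → ℝ^N be a differentiable function satisfying v_m'(t) = m·v_{m−1}(t) + v_m(t)·(R − D) for all t ≥ 0. Then D − R is invertible and, for every m ≥ 1, v_m(t) converges to m!·π·((D − R)^{-1})^m as t → ∞. -/
open Matrix Filter Nat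

lemma key_bound {N : ℕ} (M : Matrix (Fin N) (Fin N) ℝ) (K ε : ℝ)
    (hK : ∀ j, 0 ≤ K + M j j) (hKε : 0 ≤ K - ε)
    (hoff : ∀ i j, i ≠ j → 0 ≤ M i j) (hrow : ∀ j, ∑ i, M j i ≤ -ε)
    (y g : Fin N → ℝ) : ‖K • y + (M *ᵥ y + g)‖ ≤ (K - ε) * ‖y‖ + ‖g‖ := by
  rw [← add_assoc]
  refine (norm_add_le _ _).trans (add_le_add ?_ le_rfl)
  rw [pi_norm_le_iff_of_nonneg (by positivity)]
  intro j
  have h1 : (K • y + M *ᵥ y) j = ∑ i, (K • (1 : Matrix (Fin N) (Fin N) ℝ) + M) j i * y i := by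
    have : K • y + M *ᵥ y = (K • (1 : Matrix (Fin N) (Fin N) ℝ) + M) *ᵥ y := by
      rw [Matrix.add_mulVec, Matrix.smul_mulVec, Matrix.one_mulVec]
    rw [this]; rfl
  have hnn : ∀ i, 0 ≤ (K • (1 : Matrix (Fin N) (Fin N) ℝ) + M) j i := by
    intro i
    by_cases h : j = i
    · subst h; simpa using hK j
    · simpa [Matrix.one_apply, h] using hoff j i h
  rw [h1]
  calc ‖∑ i, (K • (1 : Matrix (Fin N) (Fin N) ℝ) + M) j i * y i‖
      ≤ ∑ i, (K • (1 : Matrix (Fin N) (Fin N) ℝ) + M) j i * ‖y‖ := by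
        refine norm_sum_le_of_le _ fun i _ => ?_
        rw [norm_mul, Real.norm_of_nonneg (hnn i)]
        exact mul_le_mul_of_nonneg_left (norm_le_pi_norm y i) (hnn i)
    _ = (K + ∑ i, M j i) * ‖y‖ := by
        rw [← Finset.sum_mul]
        congr 1
        simp [Finset.sum_add_distrib, Matrix.one_apply]
    _ ≤ (K - ε) * ‖y‖ := by
        have := hrow j
        exact mul_le_mul_of_nonneg_right (by linarith) (norm_nonneg _)

lemma key_tendsto {N : ℕ} (M : Matrix (Fin N) (Fin N) ℝ) (ε : ℝ) (hε : 0 < ε)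
    (hoff : ∀ i j, i ≠ j → 0 ≤ M i j) (hrow : ∀ j, ∑ i, M j i ≤ -ε)
    (y g : ℝ → Fin N → ℝ)
    (hy : ∀ t, 0 ≤ t → HasDerivAt y (M *ᵥ y t + g t) t)
    (hg : Tendsto g atTop (nhds 0)) : Tendsto y atTop (nhds 0) := by
  set K : ℝ := (∑ j, |M j j|) + ε with hKdef
  have hS : 0 ≤ ∑ j, |M j j| := Finset.sum_nonneg fun _ _ => abs_nonneg _
  have hK : ∀ j, 0 ≤ K + M j j := by
    intro j
    have h1 : |M j j| ≤ ∑ j, |M j j| :=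
      Finset.single_le_sum (f := fun j => |M j j|) (fun _ _ => abs_nonneg _) (Finset.mem_univ j)
    have h2 := neg_abs_le (M j j)
    linarith
  have hKε : 0 ≤ K - ε := by linarith
  rw [tendsto_zero_iff_norm_tendsto_zero] at hg ⊢
  rw [Metric.tendsto_atTop]
  intro δ hδ
  obtain ⟨T₀, hT₀⟩ := (hg.eventually_lt_const (show (0:ℝ) < ε * (δ/2) by positivity)).exists_forall_of_atTop
  set T := max T₀ 0
  have hT0 : 0 ≤ T := le_max_right _ _
  have hgT : ∀ t, T ≤ t → ‖g t‖ < ε * (δ/2) := fun t ht => hT₀ t ((le_max_left _ _).trans ht)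
  set C := ‖y T‖ * Real.exp (ε * T)
  have bound : ∀ t, T ≤ t → ‖y t‖ ≤ δ/2 + C * Real.exp (-(ε * t)) := by
    intro t ht
    have hf : ∀ s, T ≤ s → HasDerivAt (fun s => Real.exp (K * s) • y s)
        (Real.exp (K * s) • (K • y s + (M *ᵥ y s + g s))) s := by
      intro s hs
      have h1 : HasDerivAt (fun s => Real.exp (K * s)) (Real.exp (K * s) * K) s := by
        simpa using ((hasDerivAt_id s).const_mul K).exp
      refine (h1.smul (hy s (hT0.trans hs))).congr_deriv ?_
      rw [smul_add (Real.exp (K * s)) (K • y s), smul_smul, add_comm]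
    have hB : ∀ s, HasDerivAt (fun s => Real.exp (K * s) * (δ/2) + C * Real.exp ((K - ε) * s))
        (Real.exp (K * s) * K * (δ/2) + C * (Real.exp ((K - ε) * s) * (K - ε))) s := by
      intro s
      have h1 : HasDerivAt (fun s => Real.exp (K * s)) (Real.exp (K * s) * K) s := by
        simpa using ((hasDerivAt_id s).const_mul K).exp
      have h2 : HasDerivAt (fun s => Real.exp ((K-ε) * s)) (Real.exp ((K-ε) * s) * (K-ε)) s := by
        simpa using ((hasDerivAt_id s).const_mul (K-ε)).exp
      exact (h1.mul_const _).add (h2.const_mul C)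
    have main := image_norm_le_of_norm_deriv_right_lt_deriv_boundary
      (f := fun s => Real.exp (K * s) • y s)
      (f' := fun s => Real.exp (K * s) • (K • y s + (M *ᵥ y s + g s)))
      (a := T) (b := t)
      (B := fun s => Real.exp (K * s) * (δ/2) + C * Real.exp ((K - ε) * s))
      (B' := fun s => Real.exp (K * s) * K * (δ/2) + C * (Real.exp ((K - ε) * s) * (K - ε)))
      (fun s hs => (hf s hs.1).continuousAt.continuousWithinAt)
      (fun s hs => (hf s hs.1).hasDerivWithinAt) ?_ hB ?_
    · have h := main (Set.right_mem_Icc.2 ht)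
      simp only [norm_smul, Real.norm_eq_abs, Real.abs_exp] at h
      have e : Real.exp ((K - ε) * t) = Real.exp (K * t) * Real.exp (-(ε * t)) := by
        rw [← Real.exp_add]; ring_nf
      rw [e] at h
      have := Real.exp_pos (K * t)
      refine le_of_mul_le_mul_left (h.trans_eq ?_) this
      ring
    · simp only [norm_smul, Real.norm_eq_abs, Real.abs_exp]
      have e : Real.exp (K * T) = Real.exp (ε * T) * Real.exp ((K - ε) * T) := by
        rw [← Real.exp_add]; ring_nf
      have : C * Real.exp ((K - ε) * T) = Real.exp (K * T) * ‖y T‖ := by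
        rw [e]; simp only [C]; ring
      rw [this]
      have : 0 ≤ Real.exp (K * T) * (δ / 2) := by positivity
      linarith
    · intro s hs heq
      simp only [norm_smul, Real.norm_eq_abs, Real.abs_exp] at heq ⊢
      have h1 := key_bound M K ε hK hKε hoff hrow (y s) (g s)
      have h2 := hgT s hs.1
      have h3 := Real.exp_pos (K * s)
      calc Real.exp (K * s) * ‖K • y s + (M *ᵥ y s + g s)‖
          < Real.exp (K * s) * ((K - ε) * ‖y s‖ + ε * (δ/2)) :=
            mul_lt_mul_of_pos_left (by linarith) h3
        _ = (K - ε) * (Real.exp (K * s) * ‖y s‖) + Real.exp (K * s) * (ε * (δ/2)) := by ring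
        _ = _ := by rw [heq]; ring
  have hlim : Tendsto (fun t => C * Real.exp (-(ε * t))) atTop (nhds 0) := by
    have : Tendsto (fun t : ℝ => Real.exp (-(ε * t))) atTop (nhds 0) :=
      Real.tendsto_exp_neg_atTop_nhds_zero.comp (tendsto_id.const_mul_atTop hε)
    simpa using this.const_mul C
  obtain ⟨T₁, hT₁⟩ := (hlim.eventually_lt_const (show (0:ℝ) < δ/2 by positivity)).exists_forall_of_atTop
  refine ⟨max T T₁, fun t ht => ?_⟩
  have h1 := bound t ((le_max_left _ _).trans ht)
  have h2 := hT₁ t ((le_max_right _ _).trans ht)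
  simp only [_root_.dist_zero_right, norm_norm]
  linarith

/-- With `D` nonnegative diagonal, `R` nonnegative, `π` strictly
positive, and a nonnegative fixed point `v̄₁` of the first-moment balance
equation, the hierarchy of moment differential equations
`v_m'(t) = m·v_{m-1}(t) + v_m(t)·(R - D)` (with `v₀ ≡ π`) has each `v_m(t)`
converging to `m!·π·((D - R)⁻¹)^m`, and `D - R` is invertible. -/
theorem stmt_4 (N : ℕ) (hN : 1 ≤ N)
    (D R : Matrix (Fin N) (Fin N) ℝ)
    (hDdiag : D.IsDiag) (hDnonneg : ∀ i, 0 ≤ D i i)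
    (hR : ∀ i j, 0 ≤ R i j)
    (π : Fin N → ℝ) (hπ : ∀ i, 0 < π i)
    (hfix : ∃ vbar : Fin N → ℝ, (∀ i, 0 ≤ vbar i) ∧ vbar ᵥ* D = π + vbar ᵥ* R)
    (v : ℕ → ℝ → Fin N → ℝ)
    (hv0 : ∀ t : ℝ, v 0 t = π)
    (hode : ∀ m : ℕ, 1 ≤ m → ∀ t : ℝ, 0 ≤ t →
      HasDerivAt (v m) ((m : ℝ) • v (m - 1) t + (v m t) ᵥ* (R - D)) t) :
    IsUnit (D - R) ∧
      ∀ m : ℕ, 1 ≤ m →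
        Tendsto (v m) atTop (nhds ((m ! : ℝ) • (π ᵥ* ((D - R)⁻¹ ^ m)))) := by
  obtain ⟨w, hw0, hw⟩ := hfix
  have hDw : ∀ j, (w ᵥ* D) j = w j * D j j := by
    intro j
    simp only [Matrix.vecMul, dotProduct]
    refine Finset.sum_eq_single j (fun i _ hij => ?_) (by simp)
    rw [hDdiag hij, mul_zero]
  have hRw : ∀ j, (w ᵥ* R) j = ∑ i, w i * R i j := fun j => rfl
  have heq : ∀ j, w j * D j j = π j + ∑ i, w i * R i j := by
    intro j
    rw [← hDw, ← hRw, hw]; rfl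
  have hwpos : ∀ j, 0 < w j := by
    intro j
    refine lt_of_le_of_ne (hw0 j) fun h => ?_
    have h1 := heq j
    have h2 : 0 ≤ ∑ i, w i * R i j := Finset.sum_nonneg fun i _ => mul_nonneg (hw0 i) (hR i j)
    have h3 := hπ j
    rw [← h, zero_mul] at h1
    linarith
  have hsum : ∀ j, ∑ i, w i * (R - D) i j = - π j := by
    intro j
    have : (w ᵥ* (R - D)) j = - π j := by
      rw [Matrix.vecMul_sub, hw]; simp
    exact this
  have hoffA : ∀ i j, i ≠ j → 0 ≤ (R - D) i j := by
    intro i j hij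
    rw [Matrix.sub_apply, hDdiag hij, sub_zero]; exact hR i j
  haveI : Nonempty (Fin N) := ⟨⟨0, hN⟩⟩
  set M : Matrix (Fin N) (Fin N) ℝ := fun j i => w i * (R - D) i j / w j with hM
  obtain ⟨j₀, hj₀⟩ := Finite.exists_min (fun j => π j / w j)
  have hε : 0 < π j₀ / w j₀ := div_pos (hπ _) (hwpos _)
  have hMoff : ∀ i j, i ≠ j → 0 ≤ M i j := fun i j hij =>
    div_nonneg (mul_nonneg (hw0 _) (hoffA _ _ hij.symm)) (hw0 _)
  have hMrow : ∀ j, ∑ i, M j i ≤ -(π j₀ / w j₀) := by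
    intro j
    simp only [hM]
    rw [← Finset.sum_div, hsum, neg_div]
    exact neg_le_neg (hj₀ j)
  have hdet : IsUnit (D - R) := by
    rw [← Matrix.vecMul_injective_iff_isUnit]
    rw [← Matrix.coe_vecMulLinear, injective_iff_map_eq_zero]
    intro x hx
    have hx' : x ᵥ* (R - D) = 0 := by
      have : x ᵥ* (D - R) = 0 := hx
      rw [← neg_sub D R, Matrix.vecMul_neg, this, neg_zero]
    have hT := key_tendsto M _ hε hMoff hMrow (fun _ j => x j / w j) (fun _ => 0) ?_
      tendsto_const_nhds
    · have h0 := tendsto_nhds_unique tendsto_const_nhds hT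
      funext j
      have := congrFun h0 j
      simpa [(hwpos j).ne'] using this
    · intro t _
      have : M *ᵥ (fun j => x j / w j) = 0 := by
        funext j
        have h1 : (M *ᵥ (fun j => x j / w j)) j = (x ᵥ* (R - D)) j / w j := by
          simp only [Matrix.mulVec, Matrix.vecMul, dotProduct, hM]
          rw [Finset.sum_div]
          refine Finset.sum_congr rfl fun i _ => ?_
          have := (hwpos i).ne'
          field_simp
        rw [h1, hx']; simp
      rw [this, add_zero]
      exact hasDerivAt_const _ _
  refine ⟨hdet, ?_⟩
  have hMv : ∀ x : Fin N → ℝ, M *ᵥ (fun j => x j / w j) = fun j => (x ᵥ* (R - D)) j / w j := by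
    intro x
    funext j
    simp only [Matrix.mulVec, Matrix.vecMul, dotProduct, hM]
    rw [Finset.sum_div]
    refine Finset.sum_congr rfl fun i _ => ?_
    have := (hwpos i).ne'
    field_simp
  suffices H : ∀ m : ℕ, Tendsto (v m) atTop (nhds ((m ! : ℝ) • (π ᵥ* ((D - R)⁻¹ ^ m)))) from
    fun m _ => H m
  intro m
  induction m with
  | zero =>
    have : v 0 = fun _ => π := funext hv0
    rw [this]
    simp
  | succ m ih =>
    set L := (m ! : ℝ) • (π ᵥ* ((D - R)⁻¹ ^ m)) with hL
    set L' := ((m + 1) ! : ℝ) • (π ᵥ* ((D - R)⁻¹ ^ (m + 1))) with hL'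
    have hLL : L' ᵥ* (R - D) = -(((m + 1 : ℕ) : ℝ) • L) := by
      rw [← neg_sub D R, Matrix.vecMul_neg, hL', hL, Matrix.smul_vecMul, Matrix.vecMul_vecMul,
        pow_succ, Matrix.mul_assoc, Matrix.nonsing_inv_mul _ ((Matrix.isUnit_iff_isUnit_det _).1 hdet),
        Matrix.mul_one, smul_smul, Nat.factorial_succ]
      push_cast
      rfl
    have hT := key_tendsto M _ hε hMoff hMrow (fun t j => (v (m+1) t - L') j / w j)
      (fun t j => (((m + 1 : ℕ) : ℝ) • (v m t - L)) j / w j) ?_ ?_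
    · rw [tendsto_pi_nhds] at hT ⊢
      intro j
      have h1 := ((hT j).mul_const (w j)).add_const (L' j)
      simp only [Pi.zero_apply, zero_mul, zero_add] at h1
      refine h1.congr fun t => ?_
      rw [div_mul_cancel₀ _ (hwpos j).ne']
      simp
    · intro t ht
      have h0 := hode (m+1) (by omega) t ht
      rw [hMv, hasDerivAt_pi]
      intro j
      have h1 := (((hasDerivAt_pi.1 h0) j).sub_const (L' j)).div_const (w j)
      refine h1.congr_deriv ?_
      rw [Matrix.sub_vecMul, hLL]
      simp only [Nat.add_sub_cancel, Pi.add_apply, Pi.sub_apply, Pi.smul_apply, Pi.neg_apply,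
        smul_eq_mul]
      ring
    · rw [tendsto_pi_nhds] at ih ⊢
      intro j
      have h1 := ((((ih j).sub_const (L j)).const_mul ((m + 1 : ℕ) : ℝ))).div_const (w j)
      simpa using h1
end

section
/- Let N ≥ 1, let D be an N×N real diagonal matrix with nonnegative diagonal entries, let R and R̂ be N×N real matrices with nonnegative entries, and let π ∈ ℝ^N be a row vector with all entries strictly positive. Assume there exists a row vector with nonnegative entries v̄₁ satisfying v̄₁·D = π + v̄₁·R. Then there exists s₀ > 0 such that for every real s < s₀: the matrix D − R − s·I is invertible, and every differentiable function w : ℝ → ℝ^N satisfying w'(t) = s·w(t) + w(t)·(R − D) + π·R̂ for all t ≥ 0 converges, as t → ∞, to π·R̂·(D − R − s·I)^{-1}. -/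
open Matrix Filter

lemma metzler_decay {N : ℕ} (M : Matrix (Fin N) (Fin N) ℝ) (v : Fin N → ℝ) (δ : ℝ)
    (hδ : 0 < δ) (hv : ∀ i, 0 < v i) (hM : ∀ i j, i ≠ j → 0 ≤ M i j)
    (hvM : ∀ j, (v ᵥ* M) j ≤ -δ * v j) (x : ℝ → Fin N → ℝ)
    (hx : ∀ t : ℝ, 0 ≤ t → HasDerivAt x (x t ᵥ* M) t) :
    Tendsto x atTop (nhds 0) := by
  obtain ⟨c, hcδ, hc⟩ : ∃ c : ℝ, δ ≤ c ∧ ∀ i, 0 ≤ M i i + c := by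
    refine ⟨δ + ∑ i, |M i i|, ?_, fun i => ?_⟩
    · have : 0 ≤ ∑ i, |M i i| := Finset.sum_nonneg fun i _ => abs_nonneg _
      linarith
    · have := Finset.single_le_sum (f := fun i => |M i i|) (fun i _ => abs_nonneg _)
        (Finset.mem_univ i)
      have h2 := neg_abs_le (M i i)
      linarith
  set B : Matrix (Fin N) (Fin N) ℝ := M + c • 1 with hB
  have hBnn : ∀ i j, 0 ≤ B i j := by
    intro i j
    by_cases h : i = j
    · subst h; simpa [hB] using hc i
    · simpa [hB, h] using hM i j h
  have hxB : ∀ y : Fin N → ℝ, ∀ j, (y ᵥ* B) j = (y ᵥ* M) j + c * y j := by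
    intro y j
    simp [hB, Matrix.vecMul_add, Matrix.vecMul_smul]
  let z : ℝ → Fin N → ℝ := fun t j => Real.exp (c * t) * x t j / v j
  let z' : ℝ → Fin N → ℝ := fun t j => Real.exp (c * t) * (x t ᵥ* B) j / v j
  have hz : ∀ t, 0 ≤ t → HasDerivAt z (z' t) t := by
    intro t ht
    rw [hasDerivAt_pi]
    intro j
    have h1 := (hasDerivAt_pi.1 (hx t ht)) j
    have h2 : HasDerivAt (fun t : ℝ => Real.exp (c * t)) (Real.exp (c * t) * c) t := by
      simpa using ((hasDerivAt_id t).const_mul c).exp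
    have h3 := (h2.mul h1).div_const (v j)
    refine h3.congr_deriv ?_
    change _ = Real.exp (c * t) * (x t ᵥ* B) j / v j
    rw [hxB]
    ring
  have hb : ∀ t, ‖z' t‖ ≤ (c - δ) * ‖z t‖ + 0 := by
    intro t
    rw [add_zero]
    have hcd : 0 ≤ c - δ := by linarith
    rw [pi_norm_le_iff_of_nonneg (mul_nonneg hcd (norm_nonneg _))]
    intro j
    have he := Real.exp_pos (c * t)
    have hi : ∀ i, |Real.exp (c * t) * x t i| ≤ ‖z t‖ * v i := by
      intro i
      have := norm_le_pi_norm (z t) i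
      simp only [z, Real.norm_eq_abs, abs_div, abs_of_pos (hv i)] at this
      rwa [div_le_iff₀ (hv i)] at this
    simp only [z', Real.norm_eq_abs, abs_div, abs_of_pos (hv j)]
    rw [div_le_iff₀ (hv j)]
    have e1 : Real.exp (c * t) * (x t ᵥ* B) j = ∑ i, (Real.exp (c * t) * x t i) * B i j := by
      simp [Matrix.vecMul, dotProduct, Finset.mul_sum, mul_assoc]
    rw [e1]
    calc |∑ i, (Real.exp (c * t) * x t i) * B i j|
        ≤ ∑ i, |(Real.exp (c * t) * x t i) * B i j| := Finset.abs_sum_le_sum_abs _ _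
      _ ≤ ∑ i, (‖z t‖ * v i) * B i j := by
          refine Finset.sum_le_sum fun i _ => ?_
          rw [abs_mul, abs_of_nonneg (hBnn i j)]
          exact mul_le_mul_of_nonneg_right (hi i) (hBnn i j)
      _ = ‖z t‖ * (v ᵥ* B) j := by
          simp [Matrix.vecMul, dotProduct, Finset.mul_sum, mul_assoc]
      _ ≤ ‖z t‖ * ((c - δ) * v j) := by
          refine mul_le_mul_of_nonneg_left ?_ (norm_nonneg _)
          rw [hxB]; linarith [hvM j]
      _ = (c - δ) * ‖z t‖ * v j := by ring
  have hg : ∀ t, 0 ≤ t → ‖z t‖ ≤ ‖z 0‖ * Real.exp ((c - δ) * t) := by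
    intro t ht
    have := norm_le_gronwallBound_of_norm_deriv_right_le (f := z) (f' := z') (δ := ‖z 0‖)
      (K := c - δ) (ε := 0) (a := 0) (b := t)
      (fun u hu => (hz u hu.1).continuousAt.continuousWithinAt)
      (fun u hu => (hz u hu.1).hasDerivWithinAt) le_rfl (fun u _ => hb u) t ⟨ht, le_rfl⟩
    simpa [gronwallBound_ε0] using this
  rw [tendsto_pi_nhds]
  intro j
  have hlim : Tendsto (fun t : ℝ => ‖z 0‖ * v j * Real.exp (-(δ * t))) atTop (nhds 0) := by
    have h1 : Tendsto (fun t : ℝ => Real.exp (-(δ * t))) atTop (nhds 0) :=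
      Real.tendsto_exp_neg_atTop_nhds_zero.comp (tendsto_id.const_mul_atTop hδ)
    simpa using h1.const_mul (‖z 0‖ * v j)
  refine squeeze_zero_norm' ?_ hlim
  filter_upwards [eventually_ge_atTop 0] with t ht
  have h1 := (norm_le_pi_norm (z t) j).trans (hg t ht)
  have he := Real.exp_pos (c * t)
  simp only [z, Real.norm_eq_abs, abs_div, abs_of_pos (hv j), abs_mul, abs_of_pos he] at h1
  rw [div_le_iff₀ (hv j)] at h1
  rw [Real.norm_eq_abs]
  have h2 : Real.exp ((c - δ) * t) = Real.exp (c * t) * Real.exp (-(δ * t)) := by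
    rw [← Real.exp_add]; ring_nf
  rw [h2] at h1
  refine le_of_mul_le_mul_left (h1.trans (le_of_eq ?_)) he
  simp only [z]
  ring

/-- With `D` nonnegative diagonal, `R, R̂` nonnegative, `π` strictly
positive, and a nonnegative fixed point of the first-moment balance equation,
there exists `s₀ > 0` such that for all `s < s₀` the matrix `D - R - s·I` is
invertible and every solution of `w'(t) = s·w(t) + w(t)·(R - D) + π·R̂` on
`t ≥ 0` converges to `π·R̂·(D - R - s·I)⁻¹`. -/
theorem stmt_5 (N : ℕ) (hN : 1 ≤ N)
    (D R Rhat : Matrix (Fin N) (Fin N) ℝ)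
    (hDdiag : D.IsDiag) (hDnonneg : ∀ i, 0 ≤ D i i)
    (hR : ∀ i j, 0 ≤ R i j) (hRhat : ∀ i j, 0 ≤ Rhat i j)
    (π : Fin N → ℝ) (hπ : ∀ i, 0 < π i)
    (hfix : ∃ vbar : Fin N → ℝ, (∀ i, 0 ≤ vbar i) ∧ vbar ᵥ* D = π + vbar ᵥ* R) :
    ∃ s₀ : ℝ, 0 < s₀ ∧ ∀ s : ℝ, s < s₀ →
      IsUnit (D - R - s • (1 : Matrix (Fin N) (Fin N) ℝ)) ∧
      ∀ w : ℝ → Fin N → ℝ,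
        (∀ t : ℝ, 0 ≤ t → HasDerivAt w (s • w t + (w t) ᵥ* (R - D) + π ᵥ* Rhat) t) →
        Tendsto w atTop
          (nhds ((π ᵥ* Rhat) ᵥ* (D - R - s • (1 : Matrix (Fin N) (Fin N) ℝ))⁻¹)) := by
  obtain ⟨v, hv0, hv⟩ := hfix
  have hvD : ∀ j, (v ᵥ* D) j = v j * D j j := by
    intro j
    simp only [Matrix.vecMul, dotProduct]
    refine Finset.sum_eq_single j (fun i _ hij => ?_) (by simp)
    rw [hDdiag hij, mul_zero]
  have hvR : ∀ j, 0 ≤ (v ᵥ* R) j := fun j => by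
    simp only [Matrix.vecMul, dotProduct]
    exact Finset.sum_nonneg fun i _ => mul_nonneg (hv0 i) (hR i j)
  have hvj : ∀ j, v j * D j j = π j + (v ᵥ* R) j := by
    intro j
    rw [← hvD, hv]; rfl
  have hvpos : ∀ j, 0 < v j := by
    intro j
    rcases (hv0 j).lt_or_eq with h | h
    · exact h
    · have := hvj j
      rw [← h, zero_mul] at this
      linarith [hπ j, hvR j]
  have : Nonempty (Fin N) := ⟨⟨0, hN⟩⟩
  obtain ⟨k, hk⟩ := Finite.exists_min (fun i => π i / v i)
  refine ⟨π k / v k, div_pos (hπ k) (hvpos k), fun s hs => ?_⟩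
  set A := D - R - s • (1 : Matrix (Fin N) (Fin N) ℝ) with hA
  have key : ∀ x : ℝ → Fin N → ℝ, (∀ t : ℝ, 0 ≤ t → HasDerivAt x (x t ᵥ* (-A)) t) →
      Tendsto x atTop (nhds 0) := by
    refine metzler_decay (-A) v (π k / v k - s) (by linarith) hvpos ?_ ?_
    · intro i j hij
      have := hDdiag hij
      simp [hA, hij, this, hR i j]
    · intro j
      have h1 : (v ᵥ* (-A)) j = s * v j - π j := by
        simp only [hA, Matrix.vecMul_neg, Matrix.vecMul_sub, Matrix.vecMul_smul, Matrix.vecMul_one,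
          Pi.neg_apply, Pi.sub_apply, Pi.smul_apply, smul_eq_mul, hvD, hvj]
        ring
      rw [h1]
      have h2 := hk j
      rw [le_div_iff₀ (hvpos j)] at h2
      linarith
  have hU : IsUnit A := by
    rw [← Matrix.vecMul_injective_iff_isUnit]
    intro a b hab
    have h0 : (a - b) ᵥ* (-A) = 0 := by
      simp only at hab
      rw [Matrix.vecMul_neg, Matrix.sub_vecMul, hab, sub_self, neg_zero]
    have := key (fun _ => a - b) (fun t _ => by
      simp only [h0]; exact hasDerivAt_const t _)
    exact sub_eq_zero.1 (tendsto_nhds_unique tendsto_const_nhds this)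
  refine ⟨hU, fun w hw => ?_⟩
  set q := (π ᵥ* Rhat) ᵥ* A⁻¹ with hq
  have hqA : q ᵥ* A = π ᵥ* Rhat := by
    rw [hq, Matrix.vecMul_vecMul, Matrix.nonsing_inv_mul _ ((Matrix.isUnit_iff_isUnit_det _).1 hU),
      Matrix.vecMul_one]
  have := key (fun t => w t - q) (fun t ht => by
    refine ((hw t ht).sub_const q).congr_deriv ?_
    rw [Matrix.vecMul_neg, Matrix.sub_vecMul, hqA, hA]
    simp only [Matrix.vecMul_sub, Matrix.vecMul_smul, Matrix.vecMul_one]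
    abel)
  simpa using this.add_const q
end

section
/- Let n ≥ 1, let μ₀, …, μ_{n−1} be strictly positive reals, and let s be a real number with s < μᵢ for all i. Let M be the n×n real matrix (rows and columns indexed 0, …, n−1) with M_{ii} = μᵢ − s, M_{i,i+1} = −μ_{i+1} for 0 ≤ i ≤ n−2, and all other entries zero. Then M is invertible and its inverse has entries (M^{-1})_{ij} = (1/(μᵢ − s))·∏_{k=i+1}^{j} μ_k/(μ_k − s) for i ≤ j, and (M^{-1})_{ij} = 0 for i > j (the product is empty, hence 1, when j = i). -/
open Matrix Finset

/-- For strictly positive `μ₀,…,μ_{n-1}` and `s < μᵢ` for all `i`,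
the upper bidiagonal matrix `M` with `M_{ii} = μᵢ - s` and `M_{i,i+1} = -μ_{i+1}`
is invertible, with `(M⁻¹)_{ij} = (1/(μᵢ - s))·∏_{k=i+1}^{j} μ_k/(μ_k - s)` for
`i ≤ j` and `0` for `i > j`. -/
theorem stmt_6 (n : ℕ) (hn : 1 ≤ n) (μ : Fin n → ℝ) (hμ : ∀ i, 0 < μ i)
    (s : ℝ) (hs : ∀ i, s < μ i)
    (M : Matrix (Fin n) (Fin n) ℝ)
    (hM : ∀ i j : Fin n, M i j =
      if i = j then μ i - s
      else if (j : ℕ) = (i : ℕ) + 1 then -(μ j) else 0) :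
    IsUnit M ∧
      ∀ i j : Fin n, M⁻¹ i j =
        if i ≤ j then (1 / (μ i - s)) * ∏ k ∈ Finset.Ioc i j, μ k / (μ k - s)
        else 0 := by
  have hne : ∀ i, μ i - s ≠ 0 := fun i => (sub_pos.2 (hs i)).ne'
  let N : Matrix (Fin n) (Fin n) ℝ := Matrix.of fun i j =>
    if i ≤ j then (1 / (μ i - s)) * ∏ k ∈ Finset.Ioc i j, μ k / (μ k - s) else 0
  have hN : ∀ i j, N i j =
    if i ≤ j then (1 / (μ i - s)) * ∏ k ∈ Finset.Ioc i j, μ k / (μ k - s) else 0 :=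
    fun i j => rfl
  have h : M * N = 1 := by
    ext i j
    rw [Matrix.mul_apply, Matrix.one_apply]
    by_cases hi : (i : ℕ) + 1 < n
    · obtain ⟨i', hi'⟩ : ∃ i' : Fin n, (i' : ℕ) = i + 1 := ⟨⟨i + 1, hi⟩, rfl⟩
      have hii : i ≠ i' := by
        intro h
        have := congrArg Fin.val h
        omega
      rw [Fintype.sum_eq_add i i' hii]
      · rw [hM i i, hM i i', if_pos rfl, if_neg hii, if_pos hi', hN, hN]
        rcases lt_trichotomy i j with hij | hij | hij
        · have h1 : i' ≤ j := by
            rw [Fin.le_def, hi']; exact hij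
          have h2 : Finset.Ioc i j = insert i' (Finset.Ioc i' j) := by
            ext k
            simp only [Finset.mem_Ioc, Finset.mem_insert, Fin.ext_iff, Fin.lt_def, Fin.le_def] at *
            omega
          rw [if_pos hij.le, if_pos h1, if_neg hij.ne, h2, Finset.prod_insert (by simp)]
          have := hne i
          have := hne i'
          field_simp
          ring
        · subst hij
          have h1 : ¬ i' ≤ i := by
            rw [Fin.le_def]; omega
          simp [h1, hne i]
        · have h1 : ¬ i' ≤ j := by
            rw [Fin.le_def]; rw [Fin.lt_def] at hij; omega
          simp [h1, not_le.2 hij, hij.ne']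
      · rintro k ⟨hk1, hk2⟩
        have : (k : ℕ) ≠ i + 1 := fun h => hk2 (Fin.ext (h.trans hi'.symm))
        rw [hM, if_neg hk1.symm, if_neg this, zero_mul]
    · rw [Fintype.sum_eq_single i]
      · rw [hM, if_pos rfl, hN]
        by_cases hij : i = j
        · subst hij
          simp [hne i]
        · have h1 : ¬ i ≤ j := by
            rw [Fin.le_def]
            rw [Fin.ext_iff] at hij
            have := j.2
            omega
          simp [h1, hij]
      · intro k hk
        have : (k : ℕ) ≠ i + 1 := by
          have := k.2
          omega
        rw [hM, if_neg hk.symm, if_neg this, zero_mul]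
  refine ⟨IsUnit.of_mul_eq_one N h, fun i j => ?_⟩
  rw [Matrix.inv_eq_right_inv h, hN]
end

section
/- Let n ≥ 1 and let μ₀, …, μ_{n−1} be strictly positive reals. Define the n-node line network matrices (rows and columns indexed 0, …, n−1): D = (∑_{i=0}^{n−1} μᵢ)·I, and R with R_{jj} = (∑_{i=0}^{n−1} μᵢ) − μ_j for all j, R_{j,j+1} = μ_{j+1} for 0 ≤ j ≤ n−2, and all other entries zero. Then D − R is invertible and ((D − R)^{-1})_{ij} = 1/μᵢ for i ≤ j and ((D − R)^{-1})_{ij} = 0 for i > j. Consequently, for every integer m ≥ 1, the stationary m-th moment age vector m!·1_n·((D − R)^{-1})^m of the line network equals m!·1_n·N^m, where N is the upper-triangular matrix with N_{ij} = 1/μᵢ for i ≤ j and 0 otherwise. -/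
open Matrix Finset Nat

/-- For the `n`-node line network with rates `μ₀,…,μ_{n-1}`,
`D = (∑ μᵢ)·I` and `R` with `R_{jj} = (∑ μᵢ) - μ_j`, `R_{j,j+1} = μ_{j+1}`,
zeros elsewhere, the matrix `D - R` is invertible with
`((D - R)⁻¹)_{ij} = 1/μᵢ` for `i ≤ j` and `0` otherwise; consequently the
stationary `m`-th moment age vector `m!·1ₙ·((D - R)⁻¹)^m` equals `m!·1ₙ·N^m`
for the upper-triangular matrix `N` with `N_{ij} = 1/μᵢ` for `i ≤ j`. -/
theorem stmt_7 (n : ℕ) (hn : 1 ≤ n) (μ : Fin n → ℝ) (hμ : ∀ i, 0 < μ i)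
    (D R Nmat : Matrix (Fin n) (Fin n) ℝ)
    (hD : D = (∑ i, μ i) • (1 : Matrix (Fin n) (Fin n) ℝ))
    (hR : ∀ j l : Fin n, R j l =
      if j = l then (∑ i, μ i) - μ j
      else if (l : ℕ) = (j : ℕ) + 1 then μ l else 0)
    (hN : ∀ i j : Fin n, Nmat i j = if i ≤ j then 1 / μ i else 0) :
    IsUnit (D - R) ∧
      (∀ i j : Fin n, (D - R)⁻¹ i j = if i ≤ j then 1 / μ i else 0) ∧
      ∀ m : ℕ, 1 ≤ m →
        (m ! : ℝ) • ((fun _ => (1 : ℝ)) ᵥ* ((D - R)⁻¹ ^ m)) =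
          (m ! : ℝ) • ((fun _ => (1 : ℝ)) ᵥ* (Nmat ^ m)) := by
  have hA : ∀ i l j : Fin n, (D - R) i l * Nmat l j =
      (if i = l then (if i ≤ j then (1 : ℝ) else 0) else 0) -
        (if (l : ℕ) = (i : ℕ) + 1 then (if i < j then (1 : ℝ) else 0) else 0) := by
    intro i l j
    have hl : μ l ≠ 0 := (hμ l).ne'
    rw [Matrix.sub_apply, hD, hR, hN, Matrix.smul_apply, Matrix.one_apply, smul_eq_mul]
    by_cases h1 : i = l
    · subst h1
      by_cases h2 : i ≤ j <;> simp [h2, hl]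
    · by_cases h3 : (l : ℕ) = (i : ℕ) + 1
      · have h4 : l ≤ j ↔ i < j := by
          rw [Fin.le_def, Fin.lt_def]; omega
        by_cases h2 : i < j <;> simp [h1, h3, h4, h2, hl]
      · simp [h1, h3]
  have hmul : (D - R) * Nmat = 1 := by
    ext i j
    rw [Matrix.mul_apply, Finset.sum_congr rfl (fun l _ => hA i l j), Finset.sum_sub_distrib,
      Finset.sum_ite_eq, Matrix.one_apply]
    have h2 : (∑ l : Fin n, if (l : ℕ) = (i : ℕ) + 1 then (if i < j then (1 : ℝ) else 0) else 0)
        = if i < j then (1 : ℝ) else 0 := by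
      by_cases hij : i < j
      · have hlt : (i : ℕ) + 1 < n := by
          have := Fin.lt_def.mp hij
          have := j.isLt
          omega
        rw [Finset.sum_eq_single (⟨(i : ℕ) + 1, hlt⟩ : Fin n)]
        · simp
        · intro b _ hb
          rw [if_neg]
          intro h
          exact hb (Fin.ext h)
        · simp
      · simp [hij]
    rw [h2]
    rcases lt_trichotomy i j with h | h | h
    · simp [h, h.le, h.ne]
    · simp [h]
    · simp [h.not_ge, h.not_gt, h.ne']
  have hinv : (D - R)⁻¹ = Nmat := Matrix.inv_eq_right_inv hmul
  refine ⟨IsUnit.of_mul_eq_one _ hmul, ?_, ?_⟩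
  · intro i j
    rw [hinv, hN]
  · intro m _
    rw [hinv]
end

section
/- Let n ≥ 1, let μ₀, …, μ_{n−1} be strictly positive reals, and let s be a real number with s < μᵢ for all i. Define the n-node line network matrices (rows and columns indexed 0, …, n−1): D = (∑_{i=0}^{n−1} μᵢ)·I, R with R_{jj} = (∑_{i=0}^{n−1} μᵢ) − μ_j for all j, R_{j,j+1} = μ_{j+1} for 0 ≤ j ≤ n−2, all other entries zero, and R̂ the n×n matrix whose only nonzero entry is R̂_{00} = μ₀. Then the row vector v ∈ ℝ^n with entries v_j = ∏_{k=0}^{j} μ_k/(μ_k − s) satisfies v·(D − R − s·I) = 1_n·R̂; since D − R − s·I is invertible, v = 1_n·R̂·(D − R − s·I)^{-1} is the unique such vector. -/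
open Matrix Finset

/-- For the `n`-node line network, the row vector
`v_j = ∏_{k=0}^{j} μ_k/(μ_k - s)` satisfies `v·(D - R - s·I) = 1ₙ·R̂`, and since
`D - R - s·I` is invertible, `v = 1ₙ·R̂·(D - R - s·I)⁻¹` is the unique such
vector. -/
theorem stmt_8 (n : ℕ) (hn : 1 ≤ n) (μ : Fin n → ℝ) (hμ : ∀ i, 0 < μ i)
    (s : ℝ) (hs : ∀ i, s < μ i)
    (D R Rhat : Matrix (Fin n) (Fin n) ℝ)
    (hD : D = (∑ i, μ i) • (1 : Matrix (Fin n) (Fin n) ℝ))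
    (hR : ∀ j l : Fin n, R j l =
      if j = l then (∑ i, μ i) - μ j
      else if (l : ℕ) = (j : ℕ) + 1 then μ l else 0)
    (hRhat : ∀ i j : Fin n, Rhat i j =
      if (i : ℕ) = 0 ∧ (j : ℕ) = 0 then μ i else 0)
    (v : Fin n → ℝ)
    (hv : ∀ j : Fin n, v j = ∏ k ∈ Finset.Iic j, μ k / (μ k - s)) :
    v ᵥ* (D - R - s • (1 : Matrix (Fin n) (Fin n) ℝ)) = (fun _ => (1 : ℝ)) ᵥ* Rhat ∧
      IsUnit (D - R - s • (1 : Matrix (Fin n) (Fin n) ℝ)) ∧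
      v = ((fun _ => (1 : ℝ)) ᵥ* Rhat) ᵥ* (D - R - s • (1 : Matrix (Fin n) (Fin n) ℝ))⁻¹ ∧
      ∀ w : Fin n → ℝ,
        w ᵥ* (D - R - s • (1 : Matrix (Fin n) (Fin n) ℝ)) = (fun _ => (1 : ℝ)) ᵥ* Rhat →
        w = v := by
  set M := D - R - s • (1 : Matrix (Fin n) (Fin n) ℝ) with hM
  have hMe : ∀ j l : Fin n, M j l =
      (if j = l then μ l - s else 0) - (if (l : ℕ) = (j : ℕ) + 1 then μ l else 0) := by
    intro j l
    rw [hM, Matrix.sub_apply, Matrix.sub_apply, hR, hD, Matrix.smul_apply, Matrix.smul_apply,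
      Matrix.one_apply]
    by_cases h : j = l
    · subst h
      simp
    · simp [h]
  have hdet : M.det = ∏ i, (μ i - s) := by
    rw [Matrix.det_of_upperTriangular]
    · refine Finset.prod_congr rfl fun i _ => ?_
      rw [hMe]
      simp
    · intro i j hij
      have hij' : (j : ℕ) < (i : ℕ) := hij
      have h1 : i ≠ j := fun h => by subst h; exact lt_irrefl _ hij'
      have h2 : ¬ ((j : ℕ) = (i : ℕ) + 1) := by omega
      rw [hMe]
      simp [h1, h2]
  have hU : IsUnit M.det := by
    rw [hdet]
    exact (Finset.prod_ne_zero_iff.mpr fun i _ => (sub_pos.mpr (hs i)).ne').isUnit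
  have key : v ᵥ* M = (fun _ => (1 : ℝ)) ᵥ* Rhat := by
    funext l
    have hl : μ l - s ≠ 0 := (sub_pos.mpr (hs l)).ne'
    simp only [Matrix.vecMul, dotProduct, hMe, hRhat, mul_sub, Finset.sum_sub_distrib, one_mul,
      mul_ite, mul_zero, Finset.sum_ite_eq', Finset.mem_univ, if_true]
    rw [← mul_sub]
    by_cases h0 : (l : ℕ) = 0
    · have e1 : Finset.Iic l = {l} := by
        ext k
        simp only [Finset.mem_Iic, Finset.mem_singleton, Fin.le_def, Fin.ext_iff]
        omega
      have e2 : ∀ x : Fin n, ((x : ℕ) = 0 ∧ (l : ℕ) = 0) ↔ x = l := by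
        intro x
        rw [Fin.ext_iff]
        omega
      have e3 : ∀ x : Fin n, ¬ ((l : ℕ) = (x : ℕ) + 1) := by
        intro x
        omega
      simp only [e2, e3, if_false, Finset.sum_const_zero, Finset.sum_ite_eq', Finset.mem_univ,
        if_true, hv, e1, Finset.prod_singleton]
      field_simp
      simp
    · let p : Fin n := ⟨(l : ℕ) - 1, by omega⟩
      have hp : (p : ℕ) = (l : ℕ) - 1 := rfl
      have e1 : Finset.Iic l = insert l (Finset.Iic p) := by
        ext k
        simp only [Finset.mem_Iic, Finset.mem_insert, Fin.le_def, Fin.ext_iff]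
        omega
      have e0 : l ∉ Finset.Iic p := by
        simp only [Finset.mem_Iic, Fin.le_def]
        omega
      have e3 : ∀ x : Fin n, ((l : ℕ) = (x : ℕ) + 1) ↔ x = p := by
        intro x
        rw [Fin.ext_iff]
        omega
      simp only [h0, and_false, e3, if_false, Finset.sum_const_zero, Finset.sum_ite_eq',
        Finset.mem_univ, if_true]
      rw [hv l, e1, Finset.prod_insert e0, ← hv p]
      field_simp
      simp
  have uniq : ∀ w : Fin n → ℝ, w ᵥ* M = (fun _ => (1 : ℝ)) ᵥ* Rhat →
      w = ((fun _ => (1 : ℝ)) ᵥ* Rhat) ᵥ* M⁻¹ := by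
    intro w hw
    rw [← hw, Matrix.vecMul_vecMul, Matrix.mul_nonsing_inv _ hU, Matrix.vecMul_one]
  exact ⟨key, (Matrix.isUnit_iff_isUnit_det _).mpr hU, uniq v key,
    fun w hw => (uniq w hw).trans (uniq v key).symm⟩
end

section
/- Let λ, μ, α > 0 and set β = μ + α and γ = λ + μ + α (so γ = λ + β). Let s be a real number with s ≠ λ, s ≠ β, and λμ − γs + s² ≠ 0. Define the row 2-vectors v₀ = (λβ/((λ−s)(β−s)γ))·[β, μ(λβ − γs + s²)/(λμ − γs + s²)] and v₁ = (λβ/((β−s)γ))·[1, λμ/(λμ − γs + s²)]. Then v₀ and v₁ satisfy the stationary MGF equations of the M/M/1/1 queue with abandonment: (λ − s)·v₀ = v₁·[[β, μ],[0, α]] and (β − s)·v₁ = v₀·[[0, 0],[0, λ]] + (β/γ)·[λ, 0]. -/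
open Matrix

/-- For the M/M/1/1 queue with abandonment (arrival rate `λ`,
service rate `μ`, abandonment rate `α`, `β = μ + α`, `γ = λ + μ + α`), the row
vectors `v₀` and `v₁` given by the paper's closed-form expressions satisfy the
stationary MGF equations
`(λ - s)·v₀ = v₁·[[β, μ],[0, α]]` and
`(β - s)·v₁ = v₀·[[0,0],[0,λ]] + (β/γ)·[λ, 0]`. -/
theorem stmt_14 (lam mu al : ℝ) (hlam : 0 < lam) (hmu : 0 < mu) (hal : 0 < al)
    (β γ : ℝ) (hβ : β = mu + al) (hγ : γ = lam + mu + al)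
    (s : ℝ) (hs1 : s ≠ lam) (hs2 : s ≠ β) (hs3 : lam * mu - γ * s + s ^ 2 ≠ 0)
    (v₀ v₁ : Fin 2 → ℝ)
    (hv₀ : v₀ = (lam * β / ((lam - s) * (β - s) * γ)) •
      ![β, mu * (lam * β - γ * s + s ^ 2) / (lam * mu - γ * s + s ^ 2)])
    (hv₁ : v₁ = (lam * β / ((β - s) * γ)) •
      ![1, lam * mu / (lam * mu - γ * s + s ^ 2)]) :
    (lam - s) • v₀ = v₁ ᵥ* !![β, mu; 0, al] ∧
      (β - s) • v₁ = v₀ ᵥ* !![0, 0; 0, lam] + (β / γ) • ![lam, 0] := by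
  have h1 : lam - s ≠ 0 := sub_ne_zero.mpr hs1.symm
  have h2 : β - s ≠ 0 := sub_ne_zero.mpr hs2.symm
  have hg : γ ≠ 0 := by rw [hγ]; positivity
  have hN : lam * β - γ * s + s ^ 2 = (lam - s) * (β - s) := by
    rw [hβ, hγ]; ring
  have hD : (lam - s) * (β - s) = (lam * mu - γ * s + s ^ 2) + al * lam := by
    rw [hβ, hγ]; ring
  rw [hN] at hv₀
  generalize lam * mu - γ * s + s ^ 2 = D at *
  subst hv₀ hv₁
  constructor
  · ext i
    fin_cases i
    · simp [Matrix.vecMul, dotProduct, Fin.sum_univ_two]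
      field_simp
    · simp [Matrix.vecMul, dotProduct, Fin.sum_univ_two]
      field_simp
      linear_combination β * hD
  · ext i
    fin_cases i
    · simp [Matrix.vecMul, dotProduct, Fin.sum_univ_two]
      field_simp
    · simp [Matrix.vecMul, dotProduct, Fin.sum_univ_two]
      field_simp
end

section
/- Let λ, μ, α > 0 and set β = μ + α and γ = λ + μ + α. The function g(s) = λβμ·(λγ − (λ+γ)s + s²) / (γ·(λ−s)·(β−s)·(λμ − γs + s²)), defined for real s in a neighborhood of 0, satisfies g(0) = 1 and is differentiable at s = 0 with g'(0) = 1/λ + 1/μ + λ/((μ+α)(λ+μ+α)) + α/(λμ). -/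
/-- The stationary MGF
`g(s) = λβμ(λγ - (λ+γ)s + s²)/(γ(λ-s)(β-s)(λμ - γs + s²))` of the age at the
destination monitor of the M/M/1/1 queue with abandonment satisfies `g(0) = 1`
and is differentiable at `0` with
`g'(0) = 1/λ + 1/μ + λ/((μ+α)(λ+μ+α)) + α/(λμ)`. -/
theorem stmt_15 (lam mu al : ℝ) (hlam : 0 < lam) (hmu : 0 < mu) (hal : 0 < al)
    (β γ : ℝ) (hβ : β = mu + al) (hγ : γ = lam + mu + al)
    (g : ℝ → ℝ)
    (hg : g = fun s : ℝ =>
      lam * β * mu * (lam * γ - (lam + γ) * s + s ^ 2) /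
        (γ * (lam - s) * (β - s) * (lam * mu - γ * s + s ^ 2))) :
    g 0 = 1 ∧
      HasDerivAt g
        (1 / lam + 1 / mu + lam / ((mu + al) * (lam + mu + al)) + al / (lam * mu)) 0 := by
  have hβ0 : 0 < β := by rw [hβ]; positivity
  have hγ0 : 0 < γ := by rw [hγ]; positivity
  have hN : HasDerivAt (fun s : ℝ => lam * β * mu * (lam * γ - (lam + γ) * s + s ^ 2))
      (lam * β * mu * (-(lam + γ))) 0 := by
    have h := ((((hasDerivAt_id (0 : ℝ)).const_mul (lam + γ)).const_sub (lam * γ)).add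
      ((hasDerivAt_id (0 : ℝ)).pow 2)).const_mul (lam * β * mu)
    refine h.congr_deriv ?_
    simp
  have hD : HasDerivAt (fun s : ℝ => γ * (lam - s) * (β - s) * (lam * mu - γ * s + s ^ 2))
      (γ * (-(β * (lam * mu)) - lam * (lam * mu) - lam * β * γ)) 0 := by
    have h3 := (((hasDerivAt_id (0 : ℝ)).const_mul γ).const_sub (lam * mu)).add
      ((hasDerivAt_id (0 : ℝ)).pow 2)
    have h := ((((hasDerivAt_id (0 : ℝ)).const_sub lam).const_mul γ).mul
      ((hasDerivAt_id (0 : ℝ)).const_sub β)).mul h3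
    refine h.congr_deriv ?_
    simp
    ring
  have hD0 : γ * (lam - 0) * (β - 0) * (lam * mu - γ * 0 + 0 ^ 2) ≠ 0 := by
    have : 0 < γ * lam * β * (lam * mu) := by positivity
    simpa using this.ne'
  subst hg
  constructor
  · simp only [sub_zero, mul_zero]
    field_simp
    simp
    ring
  · refine (hN.div hD hD0).congr_deriv ?_
    rw [← hβ, ← hγ]
    have ha : al = β - mu := by linarith
    have hl : γ = lam + β := by linarith
    have hlb : 0 < lam + β := by positivity
    subst ha hl
    simp only [sub_zero, mul_zero, ne_eq, OfNat.ofNat_ne_zero, not_false_eq_true, zero_pow, add_zero]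
    field_simp
    ring
end

section
/- For all μ > 0 and α > 0 there exists λ₀ > 0 such that for every λ > λ₀, 1/λ + 1/μ + λ/((μ+α)(λ+μ+α)) + α/(λμ) < 1/λ + 1/μ + λ/(μ(λ+μ)). -/
/-- For all `μ, α > 0` there exists `λ₀ > 0` such that for every
`λ > λ₀` the average age with abandonment rate `α` is strictly smaller than the
average age without abandonment:
`1/λ + 1/μ + λ/((μ+α)(λ+μ+α)) + α/(λμ) < 1/λ + 1/μ + λ/(μ(λ+μ))`. -/
theorem stmt_16 (mu al : ℝ) (hmu : 0 < mu) (hal : 0 < al) :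
    ∃ lam₀ : ℝ, 0 < lam₀ ∧ ∀ lam : ℝ, lam₀ < lam →
      1 / lam + 1 / mu + lam / ((mu + al) * (lam + mu + al)) + al / (lam * mu) <
        1 / lam + 1 / mu + lam / (mu * (lam + mu)) := by
  refine ⟨2 * (mu + al), by positivity, fun lam h => ?_⟩
  have hl : 0 < lam := by linarith
  have h1 : lam / ((mu + al) * (lam + mu + al)) ≤ lam / ((mu + al) * (lam + mu)) := by
    apply div_le_div_of_nonneg_left hl.le (by positivity)
    apply mul_le_mul_of_nonneg_left _ (by positivity)
    linarith
  have h2 : lam / (mu * (lam + mu)) - lam / ((mu + al) * (lam + mu)) - al / (lam * mu)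
      = al * (lam ^ 2 - (lam + mu) * (mu + al)) / (lam * mu * (mu + al) * (lam + mu)) := by
    field_simp
    ring
  have h3 : 0 < lam ^ 2 - (lam + mu) * (mu + al) := by
    nlinarith [mul_pos hl (sub_pos.2 h), mul_pos (show 0 < lam - mu by linarith) (add_pos hmu hal)]
  have h4 : 0 < al * (lam ^ 2 - (lam + mu) * (mu + al)) /
      (lam * mu * (mu + al) * (lam + mu)) := by
    apply div_pos (mul_pos hal h3)
    positivity
  linarith
end

section
/- Let b > 0 and define f : ℝ → ℝ by f(z) = (2/b)·(1 − z/b) for 0 ≤ z ≤ b and f(z) = 0 otherwise. Then for every x ∈ ℝ, the convolution ∫_ℝ f(u)·f(x − u) du equals (4x/b²)·(1 − x/b + x²/(6b²)) if 0 ≤ x ≤ b, equals (2/(3b))·(2 − x/b)³ if b ≤ x ≤ 2b, and equals 0 if x < 0 or x > 2b (the two formulas agree at x = b, both giving 2/(3b)). -/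
open MeasureTheory

lemma conv_aux (b : ℝ) (hb : 0 < b) (f : ℝ → ℝ)
    (hf : ∀ z : ℝ, f z = if 0 ≤ z ∧ z ≤ b then (2 / b) * (1 - z / b) else 0)
    (x l h : ℝ) (hlh : l ≤ h)
    (H : ∀ u : ℝ, (l ≤ u ∧ u ≤ h) ↔ ((0 ≤ u ∧ u ≤ b) ∧ (0 ≤ x - u ∧ x - u ≤ b))) :
    ∫ u : ℝ, f u * f (x - u) =
      4 / b ^ 4 * (b * (b - x) * h + x * h ^ 2 / 2 - h ^ 3 / 3) -
      4 / b ^ 4 * (b * (b - x) * l + x * l ^ 2 / 2 - l ^ 3 / 3) := by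
  have h1 : (fun u : ℝ => f u * f (x - u)) = (Set.Icc l h).indicator
      (fun u => 4 / b ^ 4 * (b * (b - x) + x * u - u ^ 2)) := by
    funext u
    by_cases hu : u ∈ Set.Icc l h
    · rw [Set.indicator_of_mem hu]
      obtain ⟨h2, h3⟩ := (H u).1 hu
      rw [hf, hf, if_pos h2, if_pos h3]
      field_simp
      ring
    · rw [Set.indicator_of_notMem hu, hf, hf]
      by_cases h2 : 0 ≤ u ∧ u ≤ b
      · have h3 : ¬ (0 ≤ x - u ∧ x - u ≤ b) := fun h3 => hu ((H u).2 ⟨h2, h3⟩)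
        rw [if_neg h3, mul_zero]
      · rw [if_neg h2, zero_mul]
  rw [h1, integral_indicator measurableSet_Icc, integral_Icc_eq_integral_Ioc,
    ← intervalIntegral.integral_of_le hlh]
  refine intervalIntegral.integral_eq_sub_of_hasDerivAt
    (f := fun u : ℝ => 4 / b ^ 4 * (b * (b - x) * u + x * u ^ 2 / 2 - u ^ 3 / 3)) ?_ ?_
  · intro u _
    have := (((((hasDerivAt_id u).const_mul (b * (b - x))).add
      ((((hasDerivAt_id u).pow 2).const_mul x).div_const 2)).sub
      (((hasDerivAt_id u).pow 3).div_const 3)).const_mul (4 / b ^ 4))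
    refine HasDerivAt.congr_deriv this ?_
    simp only [id, Nat.cast_ofNat, mul_one]
    ring
  · apply Continuous.intervalIntegrable
    fun_prop

/-- For `b > 0` and `f` the density `(2/b)(1 - z/b)` on `[0, b]`
(zero elsewhere) of the stationary age of a uniform `(0,b)` renewal process,
the convolution `∫ f(u) f(x-u) du` equals `(4x/b²)(1 - x/b + x²/(6b²))` for
`0 ≤ x ≤ b`, equals `(2/(3b))(2 - x/b)³` for `b ≤ x ≤ 2b`, and equals `0` for
`x < 0` or `x > 2b`. -/
theorem stmt_17 (b : ℝ) (hb : 0 < b) (f : ℝ → ℝ)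
    (hf : ∀ z : ℝ, f z = if 0 ≤ z ∧ z ≤ b then (2 / b) * (1 - z / b) else 0) :
    ∀ x : ℝ,
      ((0 ≤ x ∧ x ≤ b) →
        ∫ u : ℝ, f u * f (x - u) =
          (4 * x / b ^ 2) * (1 - x / b + x ^ 2 / (6 * b ^ 2))) ∧
      ((b ≤ x ∧ x ≤ 2 * b) →
        ∫ u : ℝ, f u * f (x - u) = (2 / (3 * b)) * (2 - x / b) ^ 3) ∧
      ((x < 0 ∨ 2 * b < x) → ∫ u : ℝ, f u * f (x - u) = 0) := by
  intro x
  refine ⟨?_, ?_, ?_⟩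
  · rintro ⟨h0, h1⟩
    rw [conv_aux b hb f hf x 0 x h0]
    · field_simp
      ring
    · intro u
      constructor
      · rintro ⟨h2, h3⟩
        refine ⟨⟨?_, ?_⟩, ?_, ?_⟩ <;> linarith
      · rintro ⟨⟨h2, h3⟩, h4, h5⟩
        constructor <;> linarith
  · rintro ⟨h0, h1⟩
    rw [conv_aux b hb f hf x (x - b) b (by linarith)]
    · field_simp
      ring
    · intro u
      constructor
      · rintro ⟨h2, h3⟩
        refine ⟨⟨?_, ?_⟩, ?_, ?_⟩ <;> linarith
      · rintro ⟨⟨h2, h3⟩, h4, h5⟩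
        constructor <;> linarith
  · intro hx
    have : (fun u : ℝ => f u * f (x - u)) = fun _ => 0 := by
      funext u
      rw [hf, hf]
      by_cases h2 : 0 ≤ u ∧ u ≤ b
      · have h3 : ¬ (0 ≤ x - u ∧ x - u ≤ b) := by
          rintro ⟨h4, h5⟩
          rcases hx with hx | hx <;> linarith [h2.1, h2.2]
        rw [if_neg h3, mul_zero]
      · rw [if_neg h2, zero_mul]
    rw [this]
    simp
end
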